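/- For all natural numbers n and k with n ≥ k ≥ 1, the integer quotient C(n, k) / [n, k] satisfies the identity C(n, k) / [n, k] = g_{k−1}(n−k+1) / g_{k−1}(1), where g_{k−1}(m) := m(m+1)⋯(m+k−1) / lcm(m, m+1, …, m+k−1). -/

import Mathlib

/-- `rangeLcm a b` is `lcm(a, a+1, …, b)`. -/
def rangeLcm (a b : ℕ) : ℕ := (Finset.Icc a b).lcm id

/-- The lcm-binomial number `[n, k] = lcm(n, n-1, …, n-k+1) / lcm(1, 2, …, k)`. -/
def lcmBinom (n k : ℕ) : ℕ := rangeLcm (n - k + 1) n / rangeLcm 1 k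

/-- Farhi's arithmetic function `g_j(m) = m(m+1)⋯(m+j) / lcm(m, m+1, …, m+j)`. -/
def farhiG (j m : ℕ) : ℕ := (∏ i ∈ Finset.Icc m (m + j), i) / rangeLcm m (m + j)

theorem aux_prod (m k : ℕ) : m.factorial * ∏ i ∈ Finset.Icc (m + 1) (m + k), i = (m + k).factorial := by
  induction k with
  | zero => simp
  | succ k ih =>
    rw [← add_assoc, Finset.prod_Icc_succ_top (by omega), ← mul_assoc, ih, Nat.factorial_succ, mul_comm]

theorem aux_dvd (a b : ℕ) : rangeLcm a b ∣ ∏ i ∈ Finset.Icc a b, i :=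
  Finset.lcm_dvd fun _ hi => Finset.dvd_prod_of_mem (fun i => i) hi

theorem aux_pos (a b : ℕ) (ha : 1 ≤ a) : 0 < rangeLcm a b := by
  refine Nat.pos_of_dvd_of_pos (aux_dvd a b) (Finset.prod_pos fun i hi => ?_)
  have := (Finset.mem_Icc.mp hi).1
  omega

theorem aux_lcm_dvd (m k : ℕ) : rangeLcm 1 k ∣ rangeLcm (m + 1) (m + k) := by
  refine Finset.lcm_dvd fun i hi => ?_
  obtain ⟨h1, h2⟩ := Finset.mem_Icc.mp hi
  have hm := Nat.div_add_mod m i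
  have hl := Nat.mod_lt m h1
  have hd : i * (m / i + 1) ∈ Finset.Icc (m + 1) (m + k) := by
    rw [Finset.mem_Icc, mul_add]
    omega
  exact (Dvd.intro _ rfl : i ∣ i * (m / i + 1)).trans (Finset.dvd_lcm (f := id) hd)

/-- For `n ≥ k ≥ 1`, `C(n, k) / [n, k] = g_{k-1}(n-k+1) / g_{k-1}(1)`. -/
theorem choose_div_lcmBinom_eq (n k : ℕ) (hk : 1 ≤ k) (h : k ≤ n) :
    n.choose k / lcmBinom n k = farhiG (k - 1) (n - k + 1) / farhiG (k - 1) 1 := by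
  obtain ⟨m, rfl⟩ := Nat.exists_eq_add_of_le' h
  have e1 : m + k - k + 1 = m + 1 := by omega
  have e2 : m + 1 + (k - 1) = m + k := by omega
  have e3 : 1 + (k - 1) = k := by omega
  unfold lcmBinom farhiG
  rw [e1, e2, e3]
  have hP : ∏ i ∈ Finset.Icc (m + 1) (m + k), i = (m + k).choose k * ∏ i ∈ Finset.Icc 1 k, i := by
    have a := aux_prod m k
    have b := aux_prod 0 k
    have c := Nat.add_choose_mul_factorial_mul_factorial m k
    simp only [Nat.factorial_zero, one_mul, zero_add] at b
    rw [b]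
    apply Nat.eq_of_mul_eq_mul_left (Nat.factorial_pos m)
    rw [a, ← c]
    ring
  have p2 := aux_pos 1 k le_rfl
  have p1 := aux_pos (m + 1) (m + k) (by omega)
  have q2 : 0 < ∏ i ∈ Finset.Icc 1 k, i :=
    Finset.prod_pos fun i hi => (Finset.mem_Icc.mp hi).1
  obtain ⟨b, hb⟩ := aux_lcm_dvd m k
  obtain ⟨c, hc⟩ := aux_dvd 1 k
  obtain ⟨d, hd⟩ := aux_dvd (m + 1) (m + k)
  have hb0 : 0 < b := Nat.pos_of_ne_zero (by rintro rfl; omega)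
  have hc0 : 0 < c := Nat.pos_of_ne_zero (by rintro rfl; omega)
  have key : (m + k).choose k * c = b * d := by
    apply Nat.eq_of_mul_eq_mul_left p2
    rw [hd, hc, hb] at hP
    linarith
  rw [hd, Nat.mul_div_cancel_left _ p1, hc, Nat.mul_div_cancel_left _ p2, hb,
    Nat.mul_div_cancel_left _ p2, ← Nat.mul_div_mul_right _ b hc0, key,
    Nat.mul_div_mul_left _ _ hb0]
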